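/- The union K₁ ∪ K₂ of two disjoint compact convex sets K₁ and K₂ in ℂⁿ is polynomially convex. -/

import Mathlib

open Set Filter Topology

noncomputable section

/-- Evaluation of a multivariate polynomial as a function on `ℂⁿ = Fin n → ℂ`. -/
def mvEval {n : ℕ} (p : MvPolynomial (Fin n) ℂ) : (Fin n → ℂ) → ℂ :=
  fun z => MvPolynomial.eval z p

/-- The polynomially convex hull of a set in `ℂⁿ`. -/
def polyHull {n : ℕ} (K : Set (Fin n → ℂ)) : Set (Fin n → ℂ) :=
  {z | ∀ p : MvPolynomial (Fin n) ℂ, ‖mvEval p z‖ ≤ sSup ((fun w => ‖mvEval p w‖) '' K)}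

/-- A set in `ℂⁿ` is polynomially convex if it equals its polynomially convex hull. -/
def IsPolyConvex {n : ℕ} (K : Set (Fin n → ℂ)) : Prop := polyHull K = K

/-- The polynomially convex hull of a subset of `ℂ`. -/
def polyHull1 (F : Set ℂ) : Set ℂ :=
  {z | ∀ p : Polynomial ℂ, ‖p.eval z‖ ≤ sSup ((fun w => ‖p.eval w‖) '' F)}

/-- A subset of `ℂ` is polynomially convex if it equals its polynomially convex hull. -/
def IsPolyConvex1 (F : Set ℂ) : Prop := polyHull1 F = F

/-- Partial derivative in the `i`-th coordinate direction. -/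
def pd {n : ℕ} (i : Fin n) (f : (Fin n → ℂ) → ℂ) : (Fin n → ℂ) → ℂ :=
  fun z => fderiv ℂ f z (Pi.single i 1)

/-- Iterated partial derivative `D^ℓ = ∂^{ℓ₁+⋯+ℓₙ}/∂z₁^{ℓ₁}⋯∂zₙ^{ℓₙ}`. -/
def Dml {n : ℕ} (ℓ : Fin n → ℕ) (f : (Fin n → ℂ) → ℂ) : (Fin n → ℂ) → ℂ :=
  (List.finRange n).foldr (fun i g => (pd i)^[ℓ i] g) f

/-- Partial sums `S_λ` of a Taylor-type series around `ζ`, with coefficients computed from a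
given family `g` of (extended) partial derivatives: the coefficient of the monomial
`(z-ζ)^{N_j}` is `g (N_j) ζ / (N_{j,1}! ⋯ N_{j,n}!)`. -/
def pSumExt {n : ℕ} (Nj : ℕ → Fin n → ℕ) (g : (Fin n → ℕ) → (Fin n → ℂ) → ℂ)
    (ζ : Fin n → ℂ) (lam : ℕ) : (Fin n → ℂ) → ℂ :=
  fun z => ∑ j ∈ Finset.range (lam + 1),
    (((∏ i, Nat.factorial (Nj j i) : ℕ) : ℂ))⁻¹ * g (Nj j) ζ * ∏ i, (z i - ζ i) ^ (Nj j i)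

/-- Partial sums `S_λ(f,ζ)` of the Taylor development of `f` around `ζ`. -/
def pSum {n : ℕ} (Nj : ℕ → Fin n → ℕ) (f : (Fin n → ℂ) → ℂ)
    (ζ : Fin n → ℂ) (lam : ℕ) : (Fin n → ℂ) → ℂ :=
  pSumExt Nj (fun ℓ => Dml ℓ f) ζ lam

/-- The space `O(Ω)` of holomorphic functions on `Ω`. -/
def Ospace (n : ℕ) (Ω : Set (Fin n → ℂ)) : Type :=
  {f : (Fin n → ℂ) → ℂ // DifferentiableOn ℂ f Ω}

/-- Topology of uniform convergence on compact subsets of `Ω` on `O(Ω)` (the compact-open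
topology induced via restriction to `Ω`). -/
instance (n : ℕ) (Ω : Set (Fin n → ℂ)) : TopologicalSpace (Ospace n Ω) :=
  TopologicalSpace.induced
    (fun f : Ospace n Ω =>
      (⟨Ω.restrict f.1, continuousOn_iff_continuous_restrict.mp f.2.continuousOn⟩ : C(Ω, ℂ)))
    inferInstance

/-- Membership in `A^∞(Ω)`: `f` is holomorphic on `Ω` and each partial derivative `D^ℓ f`
extends continuously to the closure of `Ω`. -/
def AinfMem (n : ℕ) (Ω : Set (Fin n → ℂ)) (f : (Fin n → ℂ) → ℂ) : Prop :=
  DifferentiableOn ℂ f Ω ∧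
    ∀ ℓ : Fin n → ℕ, ∃ g : (Fin n → ℂ) → ℂ,
      ContinuousOn g (closure Ω) ∧ Set.EqOn g (Dml ℓ f) Ω

/-- The space `A^∞(Ω)`. -/
def AinfSpace (n : ℕ) (Ω : Set (Fin n → ℂ)) : Type :=
  {f : (Fin n → ℂ) → ℂ // AinfMem n Ω f}

/-- The chosen continuous extension of `D^ℓ f` to the closure of `Ω`, for `f ∈ A^∞(Ω)`.
(Its restriction to the closure of `Ω` is uniquely determined.) -/
def AinfExt {n : ℕ} {Ω : Set (Fin n → ℂ)} (f : AinfSpace n Ω) (ℓ : Fin n → ℕ) :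
    (Fin n → ℂ) → ℂ :=
  Classical.choose (f.2.2 ℓ)

lemma AinfExt_continuousOn {n : ℕ} {Ω : Set (Fin n → ℂ)} (f : AinfSpace n Ω) (ℓ : Fin n → ℕ) :
    ContinuousOn (AinfExt f ℓ) (closure Ω) :=
  (Classical.choose_spec (f.2.2 ℓ)).1

lemma AinfExt_eqOn {n : ℕ} {Ω : Set (Fin n → ℂ)} (f : AinfSpace n Ω) (ℓ : Fin n → ℕ) :
    Set.EqOn (AinfExt f ℓ) (Dml ℓ f.1) Ω :=
  (Classical.choose_spec (f.2.2 ℓ)).2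

/-- Topology on `A^∞(Ω)`: uniform convergence of every partial derivative on every compact
subset of the closure of `Ω`. -/
instance (n : ℕ) (Ω : Set (Fin n → ℂ)) : TopologicalSpace (AinfSpace n Ω) :=
  TopologicalSpace.induced
    (fun f : AinfSpace n Ω => fun ℓ : Fin n → ℕ =>
      (⟨(closure Ω).restrict (AinfExt f ℓ),
        continuousOn_iff_continuous_restrict.mp (AinfExt_continuousOn f ℓ)⟩ :
          C(closure Ω, ℂ)))
    inferInstance

/-- A smooth compact curve in `ℂⁿ`: the image of an injective `C^∞` map with
nowhere-vanishing derivative, defined on a compact interval (an arc) or on the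
circle (a closed curve, modelled by a 1-periodic map). -/
def IsSmoothCompactCurve {n : ℕ} (K : Set (Fin n → ℂ)) : Prop :=
  ∃ γ : ℝ → (Fin n → ℂ), ContDiff ℝ (⊤ : ℕ∞) γ ∧ (∀ t, deriv γ t ≠ 0) ∧ K = γ '' Set.Icc 0 1 ∧
    (Set.InjOn γ (Set.Icc 0 1) ∨ (Function.Periodic γ 1 ∧ Set.InjOn γ (Set.Ico 0 1)))

/-- A disjoint union of finitely many smooth compact curves. -/
def IsFiniteUnionOfSmoothCurves {n : ℕ} (K : Set (Fin n → ℂ)) : Prop :=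
  ∃ (m : ℕ) (C : Fin m → Set (Fin n → ℂ)),
    (∀ i, IsSmoothCompactCurve (C i)) ∧ Pairwise (Function.onFun Disjoint C) ∧ K = ⋃ i, C i


/-- Elementary quantitative bound for `b / (a + b)` when `b` is small relative to `a`. -/
lemma quot_bound {a b g : ℂ} {r ε : ℝ} (ha : a ≠ 0) (hε : 0 < ε) (hr : r * (1 + ε) ≤ ε)
    (hb : ‖b‖ ≤ r * ‖a‖) (hg : g * (a + b) = b) : ‖g‖ ≤ ε := by
  have hr1 : r < 1 := by
    by_contra h
    push Not at h
    nlinarith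
  have hapos : 0 < ‖a‖ := norm_pos_iff.mpr ha
  have h1 : ‖a‖ - ‖b‖ ≤ ‖a + b‖ := by
    have := norm_sub_norm_le a (-b)
    simpa [sub_neg_eq_add] using this
  have h2 : ‖g‖ * ‖a + b‖ = ‖b‖ := by rw [← norm_mul, hg]
  have h3 : ‖g‖ * (‖a‖ * (1 - r)) ≤ ε * (‖a‖ * (1 - r)) := by
    have : ‖a‖ * (1 - r) ≤ ‖a + b‖ := by linarith
    have h4 := mul_le_mul_of_nonneg_left this (norm_nonneg g)
    nlinarith
  exact le_of_mul_le_mul_right h3 (mul_pos hapos (by linarith))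

lemma normSq_one (z : ℂ) : ‖z + 1‖ ^ 2 - ‖z - 1‖ ^ 2 = 4 * z.re := by
  rw [Complex.sq_norm, Complex.sq_norm, Complex.normSq_apply, Complex.normSq_apply]
  simp
  ring

/-- The imaginary axis is not in the spectrum relative to a closed subalgebra. -/
lemma not_mem_spectrum_of_re {X : Type*} [TopologicalSpace X] [CompactSpace X]
    (S : Subalgebra ℂ C(X, ℂ)) (hS : IsClosed (S : Set C(X, ℂ))) (x : S)
    (hx : ∀ w, ((x : C(X, ℂ)) w).re ≠ 0) {z : ℂ} (hz : z ∈ spectrum ℂ x) : z.re ≠ 0 := by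
  intro hz0
  have := hS
  have hb := Subalgebra.spectrum_isBounded_connectedComponentIn (𝕜 := ℂ) S x hz
  have hline : {w : ℂ | w.re = 0} ⊆ (spectrum ℂ (x : C(X, ℂ)))ᶜ := by
    intro w hw hmem
    rw [ContinuousMap.spectrum_eq_range] at hmem
    obtain ⟨y, rfl⟩ := hmem
    exact hx y hw
  have hconv : Convex ℝ {w : ℂ | w.re = 0} :=
    (convex_singleton (0 : ℝ)).linear_preimage Complex.reLm
  have hsub := hconv.isPreconnected.subset_connectedComponentIn (show z ∈ _ from hz0) hline
  obtain ⟨C, hC⟩ := (hb.subset hsub).exists_norm_le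
  have h1 := hC (((|C| + 1 : ℝ) : ℂ) * Complex.I) (by simp)
  rw [norm_mul, Complex.norm_I, mul_one, Complex.norm_real, Real.norm_eq_abs,
    abs_of_pos (by positivity)] at h1
  linarith [le_abs_self C]

open Polynomial in
/-- The rational function `(x-1)^k / ((x-1)^k + (x+1)^k)` belongs to the algebra. -/
lemma exists_ratio {X : Type*} [TopologicalSpace X] [CompactSpace X] [Nonempty X]
    (S : Subalgebra ℂ C(X, ℂ)) (hS : IsClosed (S : Set C(X, ℂ))) (x : S)
    (hx : ∀ w, ((x : C(X, ℂ)) w).re ≠ 0) (k : ℕ) (hk : k ≠ 0) :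
    ∃ h ∈ S, ∀ w, h w * (((x : C(X, ℂ)) w - 1) ^ k + ((x : C(X, ℂ)) w + 1) ^ k)
      = ((x : C(X, ℂ)) w - 1) ^ k := by
  have : CompleteSpace S := hS.completeSpace_coe
  have hu : IsUnit ((x - 1) ^ k + (x + 1) ^ k) := by
    have h0 : (0 : ℂ) ∉ spectrum ℂ (aeval x (((Polynomial.X - 1) ^ k + (Polynomial.X + 1) ^ k : ℂ[X]))) := by
      rw [spectrum.map_polynomial_aeval]
      rintro ⟨z, hz, hz0⟩
      refine not_mem_spectrum_of_re S hS x hx hz ?_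
      simp only [eval_add, eval_pow, eval_sub, eval_X, eval_one] at hz0
      have h2 : ‖z - 1‖ ^ k = ‖z + 1‖ ^ k := by
        rw [← norm_pow, ← norm_pow, eq_neg_of_add_eq_zero_left hz0, norm_neg]
      have h3 := (pow_left_inj₀ (norm_nonneg _) (norm_nonneg _) hk).mp h2
      have h4 := normSq_one z
      rw [h3] at h4
      linarith
    have h1 := spectrum.zero_notMem_iff ℂ |>.mp h0
    simpa using h1
  obtain ⟨u, hu⟩ := hu
  refine ⟨((x - 1) ^ k * (↑u⁻¹ : S) : S), Subtype.property _, fun w => ?_⟩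
  have h1 : ((x - 1) ^ k * (↑u⁻¹ : S)) * ((x - 1) ^ k + (x + 1) ^ k) = (x - 1) ^ k := by
    rw [← hu, mul_assoc, Units.inv_mul, mul_one]
  have h2 := congrArg (fun s : S => (s : C(X, ℂ)) w) h1
  simpa using h2

lemma exists_step {X : Type*} [TopologicalSpace X] [CompactSpace X] [Nonempty X]
    (S : Subalgebra ℂ C(X, ℂ)) (hS : IsClosed (S : Set C(X, ℂ))) (x : S)
    (hx : ∀ w, ((x : C(X, ℂ)) w).re ≠ 0) {ε : ℝ} (hε : 0 < ε) :
    ∃ h ∈ S, ∀ w, (((x : C(X, ℂ)) w).re < 0 → ‖h w - 1‖ ≤ ε) ∧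
      (0 < ((x : C(X, ℂ)) w).re → ‖h w‖ ≤ ε) := by
  set f : C(X, ℂ) := (x : C(X, ℂ)) with hf
  have hlt1 : ∀ w, (f w).re < 0 → ‖f w + 1‖ < ‖f w - 1‖ := fun w hw =>
    lt_of_pow_lt_pow_left₀ 2 (norm_nonneg _) (by linarith [normSq_one (f w)])
  have hlt2 : ∀ w, 0 < (f w).re → ‖f w - 1‖ < ‖f w + 1‖ := fun w hw =>
    lt_of_pow_lt_pow_left₀ 2 (norm_nonneg _) (by linarith [normSq_one (f w)])
  have hmaxpos : ∀ w, 0 < max ‖f w + 1‖ ‖f w - 1‖ := fun w => by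
    rcases lt_or_gt_of_ne (hx w) with h | h
    · exact lt_max_of_lt_right (lt_of_le_of_lt (norm_nonneg _) (hlt1 w h))
    · exact lt_max_of_lt_left (lt_of_le_of_lt (norm_nonneg _) (hlt2 w h))
  have hcont : Continuous fun w => min ‖f w + 1‖ ‖f w - 1‖ / max ‖f w + 1‖ ‖f w - 1‖ := by
    refine Continuous.div ?_ ?_ fun w => (hmaxpos w).ne'
    · fun_prop
    · fun_prop
  obtain ⟨w0, -, hw0⟩ := isCompact_univ.exists_isMaxOn univ_nonempty hcont.continuousOn
  set ρ := min ‖f w0 + 1‖ ‖f w0 - 1‖ / max ‖f w0 + 1‖ ‖f w0 - 1‖ with hρ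
  have hρ0 : 0 ≤ ρ := by positivity
  have hρ1 : ρ < 1 := by
    rw [hρ, div_lt_one (hmaxpos w0)]
    rcases lt_or_gt_of_ne (hx w0) with h | h
    · exact min_lt_of_left_lt (lt_max_of_lt_right (hlt1 w0 h))
    · exact min_lt_of_right_lt (lt_max_of_lt_left (hlt2 w0 h))
  have hmin : ∀ w, min ‖f w + 1‖ ‖f w - 1‖ ≤ ρ * max ‖f w + 1‖ ‖f w - 1‖ := fun w =>
    (div_le_iff₀ (hmaxpos w)).mp (hw0 (mem_univ w))
  obtain ⟨k, hk⟩ := exists_pow_lt_of_lt_one (show 0 < ε / (1 + ε) by positivity) hρ1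
  have hr : ρ ^ (k + 1) * (1 + ε) ≤ ε := by
    rw [← le_div_iff₀ (by positivity)]
    exact (pow_le_pow_of_le_one hρ0 hρ1.le (Nat.le_succ k)).trans hk.le
  obtain ⟨h, hhS, hh⟩ := exists_ratio S hS x hx (k + 1) (Nat.succ_ne_zero k)
  refine ⟨h, hhS, fun w => ⟨fun hw => ?_, fun hw => ?_⟩⟩
  · have h1 := hlt1 w hw
    have h2 := hmin w
    rw [min_eq_left h1.le, max_eq_right h1.le] at h2
    have hne : f w - 1 ≠ 0 := norm_pos_iff.mp (lt_of_le_of_lt (norm_nonneg _) h1)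
    rw [norm_sub_rev]
    refine quot_bound (a := (f w - 1) ^ (k + 1)) (b := (f w + 1) ^ (k + 1))
      (pow_ne_zero _ hne) hε hr ?_ ?_
    · rw [norm_pow, norm_pow, ← mul_pow]
      exact pow_le_pow_left₀ (norm_nonneg _) h2 _
    · have := hh w
      rw [sub_mul, this]
      ring
  · have h1 := hlt2 w hw
    have h2 := hmin w
    rw [min_eq_right h1.le, max_eq_left h1.le] at h2
    have hne : f w + 1 ≠ 0 := norm_pos_iff.mp (lt_of_le_of_lt (norm_nonneg _) h1)
    refine quot_bound (a := (f w + 1) ^ (k + 1)) (b := (f w - 1) ^ (k + 1))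
      (pow_ne_zero _ hne) hε hr ?_ ?_
    · rw [norm_pow, norm_pow, ← mul_pow]
      exact pow_le_pow_left₀ (norm_nonneg _) h2 _
    · rw [add_comm]
      exact hh w

/-- Affine functions are polynomials. -/
lemma exists_affine_poly {n : ℕ} (l : (Fin n → ℂ) →L[ℂ] ℂ) (c : ℂ) :
    ∃ p : MvPolynomial (Fin n) ℂ, ∀ z, mvEval p z = l z + c := by
  refine ⟨∑ i, MvPolynomial.C (l (Pi.single i 1)) * MvPolynomial.X i + MvPolynomial.C c,
    fun z => ?_⟩
  have h : z = ∑ i, z i • (Pi.single i 1 : Fin n → ℂ) := by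
    ext j
    simp [Finset.sum_apply, Pi.single_apply]
  conv_rhs => rw [h]
  simp [mvEval, mul_comm]

lemma continuous_mvEval {n : ℕ} (p : MvPolynomial (Fin n) ℂ) : Continuous (mvEval p) :=
  MvPolynomial.continuous_eval p

/-- A point outside a compact convex set is separated from it by an affine polynomial modulus. -/
lemma exists_sep_poly {n : ℕ} {K : Set (Fin n → ℂ)} (hK : IsCompact K) (hcv : Convex ℝ K)
    {z : Fin n → ℂ} (hz : z ∉ K) :
    ∃ (p : MvPolynomial (Fin n) ℂ) (a : ℝ), 0 ≤ a ∧ (∀ w ∈ K, ‖mvEval p w‖ ≤ a) ∧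
      a < ‖mvEval p z‖ := by
  obtain ⟨m, u, hm, hu⟩ :=
    RCLike.geometric_hahn_banach_closed_point (𝕜 := ℂ) hcv hK.isClosed hz
  simp only [RCLike.re_to_complex] at hm hu
  obtain ⟨B, hB⟩ := hK.exists_bound_of_continuousOn
    (f := fun w => m w - m z) (by fun_prop)
  set δ := (m z).re - u with hδ
  have hδ0 : 0 < δ := by linarith
  set R : ℝ := B ^ 2 / (2 * δ) + 1 with hR
  have hR0 : 0 < R := by positivity
  obtain ⟨p, hp⟩ := exists_affine_poly m ((R : ℂ) - m z)
  have hpz : ‖mvEval p z‖ = R := by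
    rw [hp, add_sub_cancel, Complex.norm_real, Real.norm_of_nonneg hR0.le]
  have hlt : ∀ w ∈ K, ‖mvEval p w‖ < R := by
    intro w hw
    refine lt_of_pow_lt_pow_left₀ 2 hR0.le ?_
    have h1 : mvEval p w = (m w - m z) + R := by rw [hp]; ring
    have h2 := hB w hw
    have h3 : ‖m w - m z‖ ^ 2 ≤ B ^ 2 := pow_le_pow_left₀ (norm_nonneg _) h2 2
    have h4 : (m w - m z).re < -δ := by
      rw [Complex.sub_re]; linarith [hm w hw]
    rw [h1, Complex.sq_norm, Complex.normSq_apply]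
    rw [Complex.sq_norm, Complex.normSq_apply] at h3
    simp only [Complex.add_re, Complex.add_im, Complex.ofReal_re, Complex.ofReal_im, add_zero]
    have h5 : 2 * R * δ = B ^ 2 + 2 * δ := by rw [hR]; field_simp
    nlinarith
  rcases K.eq_empty_or_nonempty with rfl | hne
  · exact ⟨p, 0, le_rfl, by simp, by rw [hpz]; exact hR0⟩
  · obtain ⟨w0, hw0, hmax⟩ := hK.exists_isMaxOn hne (continuous_mvEval p).norm.continuousOn
    exact ⟨p, ‖mvEval p w0‖, norm_nonneg _, fun w hw => hmax hw, by rw [hpz]; exact hlt w0 hw0⟩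

/-- The key step: a hull point on the side of `K₁` belongs to `K₁`. -/
lemma mem_of_mem_hull {n : ℕ} {K₁ K₂ : Set (Fin n → ℂ)} (h1 : IsCompact K₁) (hcv : Convex ℝ K₁)
    (h2 : IsCompact K₂) {z : Fin n → ℂ} (hz : z ∈ polyHull (K₁ ∪ K₂))
    (l : (Fin n → ℂ) →L[ℂ] ℂ) (c : ℝ) (hl1 : ∀ w ∈ K₁, (l w).re < c)
    (hlz : (l z).re < c) (hl2 : ∀ w ∈ K₂, c < (l w).re) : z ∈ K₁ := by
  by_contra hzK
  obtain ⟨q, a, ha0, hqa, hqz⟩ := exists_sep_poly h1 hcv hzK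
  set K' : Set (Fin n → ℂ) := insert z (K₁ ∪ K₂) with hK'
  have hK'c : IsCompact K' := (h1.union h2).insert z
  have : CompactSpace K' := isCompact_iff_compactSpace.mp hK'c
  have : Nonempty K' := ⟨⟨z, mem_insert _ _⟩⟩
  let Φ : MvPolynomial (Fin n) ℂ →ₐ[ℂ] C(K', ℂ) :=
    MvPolynomial.aeval fun i => (⟨fun w => w.1 i, (continuous_apply i).comp continuous_subtype_val⟩ : C(K', ℂ))
  have hΦ : ∀ p (w : K'), Φ p w = mvEval p w.1 := by
    intro p w
    have : ((ContinuousMap.evalAlgHom ℂ ℂ w).comp Φ) = MvPolynomial.aeval w.1 := by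
      apply MvPolynomial.algHom_ext
      intro i
      simp [Φ]
    have h := DFunLike.congr_fun this p
    simpa [mvEval, MvPolynomial.aeval_eq_eval] using h
  set S := Φ.range.topologicalClosure with hSdef
  have hS : IsClosed (S : Set C(K', ℂ)) := Subalgebra.isClosed_topologicalClosure _
  have hmemS : ∀ p, Φ p ∈ S := fun p => Subalgebra.le_topologicalClosure _ ⟨p, rfl⟩
  let z' : K' := ⟨z, mem_insert _ _⟩
  -- hull estimate extends to the closure
  have hest : ∀ F ∈ S, ∀ M : ℝ, 0 ≤ M → (∀ w : K', w.1 ∈ K₁ ∪ K₂ → ‖F w‖ ≤ M) →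
      ‖F z'‖ ≤ M := by
    intro F hF M hM hFM
    refine le_of_forall_pos_le_add fun ε hε => ?_
    have hF' : F ∈ closure (Φ.range : Set C(K', ℂ)) := hF
    obtain ⟨G, ⟨p, rfl⟩, hG⟩ := Metric.mem_closure_iff.mp hF' (ε / 2) (by positivity)
    have hd : ∀ w, ‖F w - Φ p w‖ ≤ ε / 2 := fun w => by
      rw [← dist_eq_norm]
      exact (ContinuousMap.dist_apply_le_dist w).trans hG.le
    have hp : ‖mvEval p z‖ ≤ M + ε / 2 := by
      refine (hz p).trans (Real.sSup_le ?_ (by positivity))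
      rintro _ ⟨w, hw, rfl⟩
      have e1 := hd ⟨w, mem_insert_of_mem _ hw⟩
      have e2 := hFM ⟨w, mem_insert_of_mem _ hw⟩ hw
      rw [hΦ] at e1
      have e3 := norm_sub_norm_le (mvEval p w) (F ⟨w, mem_insert_of_mem _ hw⟩)
      rw [norm_sub_rev] at e3
      change ‖mvEval p w‖ ≤ _
      linarith
    have e1 := hd z'
    rw [hΦ] at e1
    have e3 := norm_sub_norm_le (F z') (mvEval p z)
    linarith
  obtain ⟨px, hpx⟩ := exists_affine_poly l (-(c : ℂ))
  have hxre : ∀ w : K', (Φ px w).re = (l w.1).re - c := fun w => by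
    rw [hΦ, hpx]; simp [sub_eq_add_neg]
  let x : S := ⟨Φ px, hmemS px⟩
  have hx : ∀ w, ((x : C(K', ℂ)) w).re ≠ 0 := by
    intro w
    change (Φ px w).re ≠ 0
    rw [hxre]
    rcases w.2 with h | h | h
    · rw [h]; linarith
    · linarith [hl1 _ h]
    · linarith [hl2 _ h]
  obtain ⟨B, hB⟩ := h2.exists_bound_of_continuousOn (continuous_mvEval q).continuousOn
  set d := ‖mvEval q z‖ with hd
  have hd0 : 0 < d := lt_of_le_of_lt ha0 hqz
  -- choose ε
  set ε := (d - a) / (2 * (d + a + |B| + 1)) with hε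
  have hε0 : 0 < ε := div_pos (by linarith) (by positivity)
  have hεeq : ε * (2 * (d + a + |B| + 1)) = d - a := by
    rw [hε]; field_simp
  obtain ⟨h, hhS, hh⟩ := exists_step S hS x hx hε0
  have hlow : ‖h z' - 1‖ ≤ ε := (hh z').1 (by
    change (Φ px z').re < 0
    rw [hxre]; linarith)
  have hB' : |B| ≥ B := le_abs_self B
  have key := hest (Φ q * h) (S.mul_mem (hmemS q) hhS) (a * (1 + ε) + |B| * ε)
    (by positivity) (by
      intro w hw
      rw [ContinuousMap.mul_apply, norm_mul, hΦ]
      rcases hw with hw | hw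
      · have e1 : ‖h w - 1‖ ≤ ε := (hh w).1 (by
          change (Φ px w).re < 0
          rw [hxre]; linarith [hl1 _ hw])
        have e2 : ‖h w‖ ≤ 1 + ε := by
          have := norm_sub_norm_le (h w) 1
          rw [norm_one] at this
          linarith
        have e3 := mul_le_mul (hqa _ hw) e2 (norm_nonneg _) ha0
        have : 0 ≤ |B| * ε := by positivity
        linarith
      · have e1 : ‖h w‖ ≤ ε := (hh w).2 (by
          change 0 < (Φ px w).re
          rw [hxre]; linarith [hl2 _ hw])
        have e3 := mul_le_mul ((hB _ hw).trans hB') e1 (norm_nonneg _) (abs_nonneg B)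
        have : 0 ≤ a * (1 + ε) := by positivity
        linarith)
  rw [ContinuousMap.mul_apply, norm_mul, hΦ] at key
  change d * ‖h z'‖ ≤ _ at key
  have e2 : 1 - ε ≤ ‖h z'‖ := by
    have := norm_sub_norm_le 1 (h z')
    rw [norm_one, norm_sub_rev] at this
    linarith
  have e4 := mul_le_mul_of_nonneg_left e2 hd0.le
  nlinarith

/-- the union of two disjoint compact convex sets in `ℂⁿ` is polynomially
convex. -/
theorem isPolyConvex_union_of_convex (n : ℕ) (K₁ K₂ : Set (Fin n → ℂ))
    (hK₁cpt : IsCompact K₁) (hK₁cv : Convex ℝ K₁)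
    (hK₂cpt : IsCompact K₂) (hK₂cv : Convex ℝ K₂)
    (hdisj : Disjoint K₁ K₂) :
    IsPolyConvex (K₁ ∪ K₂) := by
  apply Subset.antisymm
  · intro z hz
    obtain ⟨l, u, v, h1, huv, h2⟩ := RCLike.geometric_hahn_banach_compact_closed (𝕜 := ℂ)
      hK₁cv hK₁cpt hK₂cv hK₂cpt.isClosed hdisj
    simp only [RCLike.re_to_complex] at h1 h2
    rcases lt_or_ge (l z).re v with h | h
    · exact Or.inl (mem_of_mem_hull hK₁cpt hK₁cv hK₂cpt hz l v
        (fun w hw => (h1 w hw).trans huv) h h2)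
    · right
      rw [union_comm] at hz
      refine mem_of_mem_hull hK₂cpt hK₂cv hK₁cpt hz (-l) (-u) ?_ ?_ ?_
      · intro w hw
        simp only [ContinuousLinearMap.neg_apply, Complex.neg_re]
        linarith [h2 w hw]
      · simp only [ContinuousLinearMap.neg_apply, Complex.neg_re]
        linarith
      · intro w hw
        simp only [ContinuousLinearMap.neg_apply, Complex.neg_re]
        linarith [h1 w hw]
  · intro z hz p
    have hc := (hK₁cpt.union hK₂cpt).image (continuous_mvEval p).norm
    exact le_csSup hc.bddAbove ⟨z, hz, rfl⟩

end
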